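/- Let Q₋ = {(−2,0,−2), (2,0,2), (−1,−1,0), (1,1,0), (−1,2,0), (1,2,0), (0,0,−1)} and Q₊ = {(−2,0,−2), (2,0,2), (−1,−1,0), (1,1,0), (−1,2,0), (1,2,0), (0,0,1)} be 7-point subsets of Euclidean ℝ³. Then there is no isometry f : ℝ³ → ℝ³ with f(Q₋) = Q₊. -/

import Mathlib

/-- A point of Euclidean space `ℝ³` with given coordinates. -/
noncomputable def pt3 (x y z : ℝ) : EuclideanSpace ℝ (Fin 3) :=
  (WithLp.equiv 2 (Fin 3 → ℝ)).symm ![x, y, z]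

/-- The 7-point cloud
`Q₋ = {(−2,0,−2), (2,0,2), (−1,−1,0), (1,1,0), (−1,2,0), (1,2,0), (0,0,−1)}`. -/
noncomputable def Qminus : Set (EuclideanSpace ℝ (Fin 3)) :=
  {pt3 (-2) 0 (-2), pt3 2 0 2, pt3 (-1) (-1) 0, pt3 1 1 0,
   pt3 (-1) 2 0, pt3 1 2 0, pt3 0 0 (-1)}

/-- The 7-point cloud
`Q₊ = {(−2,0,−2), (2,0,2), (−1,−1,0), (1,1,0), (−1,2,0), (1,2,0), (0,0,1)}`. -/
noncomputable def Qplus : Set (EuclideanSpace ℝ (Fin 3)) :=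
  {pt3 (-2) 0 (-2), pt3 2 0 2, pt3 (-1) (-1) 0, pt3 1 1 0,
   pt3 (-1) 2 0, pt3 1 2 0, pt3 0 0 1}

lemma pt3_dist_sq (a b c x y z : ℝ) :
    dist (pt3 a b c) (pt3 x y z) ^ 2 = (a - x) ^ 2 + (b - y) ^ 2 + (c - z) ^ 2 := by
  rw [EuclideanSpace.dist_eq, Real.sq_sqrt (by positivity)]
  simp [pt3, Fin.sum_univ_three, Real.dist_eq, sq_abs]

/-- No isometry of `ℝ³` (a distance-preserving bijection) maps `Q₋` onto `Q₊`. -/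
theorem Qminus_not_isometric_Qplus :
    ¬ ∃ f : EuclideanSpace ℝ (Fin 3) → EuclideanSpace ℝ (Fin 3),
        Function.Bijective f ∧ (∀ p q, dist (f p) (f q) = dist p q) ∧
        f '' Qminus = Qplus := by
  rintro ⟨f, -, hd, hQ⟩
  have hm : ∀ p ∈ Qminus, f p ∈ Qplus := fun p hp => hQ ▸ Set.mem_image_of_mem f hp
  have hs : ∀ p q, dist (f p) (f q) ^ 2 = dist p q ^ 2 := fun p q => by rw [hd]
  have hA := hm (pt3 (-2) 0 (-2)) (by simp [Qminus])
  have hE := hm (pt3 2 0 2) (by simp [Qminus])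
  have hO := hm (pt3 0 0 (-1)) (by simp [Qminus])
  have hD := hm (pt3 1 1 0) (by simp [Qminus])
  have hF := hm (pt3 1 2 0) (by simp [Qminus])
  have hAE := hs (pt3 (-2) 0 (-2)) (pt3 2 0 2)
  have hAO := hs (pt3 (-2) 0 (-2)) (pt3 0 0 (-1))
  have hAD := hs (pt3 (-2) 0 (-2)) (pt3 1 1 0)
  have hED := hs (pt3 2 0 2) (pt3 1 1 0)
  have hDF := hs (pt3 1 1 0) (pt3 1 2 0)
  simp only [Qplus, Set.mem_insert_iff, Set.mem_singleton_iff] at hA hE hO hD hF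
  generalize f (pt3 (-2) 0 (-2)) = A at *
  generalize f (pt3 2 0 2) = E at *
  generalize f (pt3 0 0 (-1)) = O at *
  generalize f (pt3 1 1 0) = D at *
  generalize f (pt3 1 2 0) = F at *
  -- the diameter is realised only by the first two points
  have h1 : (A = pt3 (-2) 0 (-2) ∧ E = pt3 2 0 2) ∨ (A = pt3 2 0 2 ∧ E = pt3 (-2) 0 (-2)) := by
    clear hs hd hm hQ hAO hAD hED hDF hO hD hF
    rcases hA with rfl | rfl | rfl | rfl | rfl | rfl | rfl <;>
    rcases hE with rfl | rfl | rfl | rfl | rfl | rfl | rfl <;>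
    first
    | exact Or.inl ⟨rfl, rfl⟩
    | exact Or.inr ⟨rfl, rfl⟩
    | (exfalso; simp only [pt3_dist_sq] at hAE; norm_num at hAE)
  rcases h1 with ⟨rfl, rfl⟩ | ⟨rfl, rfl⟩
  · rcases hO with rfl | rfl | rfl | rfl | rfl | rfl | rfl <;>
    (simp only [pt3_dist_sq] at hAO; norm_num at hAO)
  · have h2 : D = pt3 (-1) (-1) 0 := by
      rcases hD with rfl | rfl | rfl | rfl | rfl | rfl | rfl <;>
      first
      | rfl
      | (exfalso; simp only [pt3_dist_sq] at hED; norm_num at hED; done)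
      | (exfalso; simp only [pt3_dist_sq] at hAD; norm_num at hAD; done)
    subst h2
    rcases hF with rfl | rfl | rfl | rfl | rfl | rfl | rfl <;>
    (simp only [pt3_dist_sq] at hDF; norm_num at hDF)
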